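/- Let n ≥ 1, R > 0, let V : ℝⁿ → ℝ be a bounded measurable real-valued function, let λ ∈ ℂ with Im λ ≠ 0, let f : ℝⁿ → ℂ be continuous, and let u : ℝⁿ → ℂ be smooth with Δ²u + V·u − λ·u = f at every point of the closed ball of radius R centered at the origin, and with u(x) = 0 and Δu(x) = 0 for every x ∈ ∂B_R. Then (∫_{B_R} |u|² dx)^{1/2} ≤ (1/|Im λ|)·(∫_{B_R} |f|² dx)^{1/2}. -/

import Mathlib

open MeasureTheory Metric

/-- The Laplacian of a complex-valued function on `EuclideanSpace ℝ (Fin n)`: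
the trace of the second Fréchet derivative. -/
noncomputable def lapC (n : ℕ) (f : EuclideanSpace ℝ (Fin n) → ℂ) (x : EuclideanSpace ℝ (Fin n)) : ℂ :=
  ∑ i : Fin n, fderiv ℝ (fderiv ℝ f) x (EuclideanSpace.single i 1) (EuclideanSpace.single i 1)

/-!
Integration by parts on a bounded open set is reduced to the integration by parts formula for
Lipschitz functions on the whole space: a `C¹` function vanishing on the boundary stays Lipschitz
when extended by zero, and the derivative of the extension vanishes almost everywhere off the set,
so no regularity of the boundary is needed.

The boundary conditions make the bilaplacian symmetric: `∫ ⟪u, Δ(Δu)⟫ = ∫ ⟪Δu, Δu⟫` is real. As `V`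
is real too, pairing the equation with `u` and taking imaginary parts leaves
`∫ Im ⟪u, f⟫ = -Im λ ∫ ‖u‖²`, and the estimate follows from `|Im ⟪u, f⟫| ≤ ‖u‖ ‖f‖` and AM-GM.
-/

open Set Filter Bornology
open scoped InnerProductSpace NNReal Laplacian

section ZeroExtension

theorem nonempty_inter_frontier_of_isPreconnected {X : Type*} [TopologicalSpace X] {s t : Set X}
    (ht : IsPreconnected t) (hts : (t ∩ s).Nonempty) (hts' : (t ∩ sᶜ).Nonempty) :
    (t ∩ frontier s).Nonempty := by
  rw [frontier_eq_closure_inter_closure]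
  refine isPreconnected_closed_iff.1 ht _ _ isClosed_closure isClosed_closure ?_
    (hts.mono (inter_subset_inter_right t subset_closure))
    (hts'.mono (inter_subset_inter_right t subset_closure))
  exact fun x _ => (em (x ∈ s)).imp (subset_closure ·) (subset_closure ·)

theorem lipschitzWith_indicator_of_eq_zero_on_frontier {E F : Type*} [NormedAddCommGroup E]
    [NormedSpace ℝ E] [SeminormedAddCommGroup F] {s : Set E} {h : E → F} {K : ℝ≥0}
    (hK : LipschitzOnWith K h (closure s)) (h0 : ∀ x ∈ frontier s, h x = 0) :
    LipschitzWith K (s.indicator h) := by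
  have across : ∀ x ∈ s, ∀ y ∉ s, dist (s.indicator h x) (s.indicator h y) ≤ K * dist x y := by
    intro x hx y hy
    obtain ⟨z, hz, hzs⟩ := nonempty_inter_frontier_of_isPreconnected
      (convex_segment (𝕜 := ℝ) x y).isPreconnected
      ⟨x, left_mem_segment ℝ x y, hx⟩ ⟨y, right_mem_segment ℝ x y, hy⟩
    calc dist (s.indicator h x) (s.indicator h y)
        = dist (h x) (h z) := by
          rw [indicator_of_mem hx, indicator_of_notMem hy, h0 z hzs]
      _ ≤ K * dist x z := hK.dist_le_mul x (subset_closure hx) z (frontier_subset_closure hzs)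
      _ ≤ K * dist x y := by
          gcongr
          linarith [dist_add_dist_of_mem_segment hz, dist_nonneg (x := z) (y := y)]
  refine LipschitzWith.of_dist_le_mul fun x y => ?_
  by_cases hx : x ∈ s <;> by_cases hy : y ∈ s
  · rw [indicator_of_mem hx, indicator_of_mem hy]
    exact hK.dist_le_mul x (subset_closure hx) y (subset_closure hy)
  · exact across x hx y hy
  · rw [dist_comm, dist_comm x y]
    exact across y hy x hx
  · rw [indicator_of_notMem hx, indicator_of_notMem hy, dist_self]
    positivity

end ZeroExtension

section Divergence

theorem integrableOn_of_continuous_of_isBounded {X F : Type*} [MetricSpace X] [ProperSpace X]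
    [MeasurableSpace X] [OpensMeasurableSpace X] {μ : Measure X} [IsFiniteMeasureOnCompacts μ]
    [NormedAddCommGroup F] {s : Set X} (hs : IsBounded s) {g : X → F} (hg : Continuous g) :
    IntegrableOn g s μ :=
  (hg.continuousOn.integrableOn_compact hs.isCompact_closure).mono_set subset_closure

variable {E : Type*} [NormedAddCommGroup E] [NormedSpace ℝ E] [FiniteDimensional ℝ E]
  [MeasurableSpace E] [BorelSpace E] {μ : Measure E} [μ.IsAddHaarMeasure] {Ω : Set E}

theorem ae_restrict_fderiv_eq_zero_of_eq_zero {s : Set E} {h : E → ℝ} (hs : MeasurableSet s)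
    (hd : ∀ x ∈ s, DifferentiableAt ℝ h x) (h0 : ∀ x ∈ s, h x = 0) :
    ∀ᵐ x ∂μ.restrict s, fderiv ℝ h x = 0 := by
  rcases subsingleton_or_nontrivial E with hE | hE
  · exact Eventually.of_forall fun x => Subsingleton.elim _ _
  obtain ⟨e, he⟩ := exists_ne (0 : E)
  -- The library lemma is about endomorphisms, hence the detour through `h • e`.
  have approx : ApproximatesLinearOn (fun x => h x • e) (0 : E →L[ℝ] E) s 0 := by
    intro x hx y hy
    simp [h0 x hx, h0 y hy]
  filter_upwards [approx.norm_fderiv_sub_le μ hs (fun x => (fderiv ℝ h x).smulRight e)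
    fun x hx => ((hd x hx).hasFDerivAt.smul_const e).hasFDerivWithinAt] with x hx
  simpa [he] using hx

theorem integral_fderiv_apply_eq_zero_of_hasCompactSupport {H : E → ℝ} {K : ℝ≥0}
    (hH : LipschitzWith K H) (hc : HasCompactSupport H) (e : E) :
    ∫ x, fderiv ℝ H x e ∂μ = 0 := by
  have parts := LipschitzWith.integral_lineDeriv_mul_eq (μ := μ)
    (LipschitzWith.const (1 : ℝ)) hH hc (-e)
  calc ∫ x, fderiv ℝ H x e ∂μ
      = ∫ x, lineDeriv ℝ H x e ∂μ := integral_congr_ae <| by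
        filter_upwards [hH.ae_differentiableAt] with x hx using hx.lineDeriv_eq_fderiv.symm
    _ = 0 := by simpa [lineDeriv] using parts.symm

theorem setIntegral_fderiv_apply_eq_zero_of_eq_zero_on_frontier_real (hΩ : IsOpen Ω)
    (hΩb : IsBounded Ω) {h : E → ℝ} (hh : ContDiff ℝ 1 h) (h0 : ∀ x ∈ frontier Ω, h x = 0)
    (e : E) :
    ∫ x in Ω, fderiv ℝ h x e ∂μ = 0 := by
  obtain ⟨r, hr⟩ := hΩb.closure.subset_closedBall 0
  obtain ⟨K, hK⟩ := hh.contDiffOn.exists_lipschitzOnWith one_ne_zero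
    (convex_closedBall 0 r) (isCompact_closedBall (0 : E) r)
  have hLip : LipschitzWith K (Ω.indicator h) :=
    lipschitzWith_indicator_of_eq_zero_on_frontier (hK.mono hr) h0
  have hsupp : HasCompactSupport (Ω.indicator h) :=
    HasCompactSupport.intro hΩb.isCompact_closure fun x hx =>
      indicator_of_notMem (fun hxΩ => hx (subset_closure hxΩ)) h
  have inside : ∀ x ∈ Ω, fderiv ℝ (Ω.indicator h) x = fderiv ℝ h x := fun x hx =>
    EventuallyEq.fderiv_eq <| by
      filter_upwards [hΩ.mem_nhds hx] with y hy using indicator_of_mem hy h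
  have outside : ∀ᵐ x ∂μ, x ∉ Ω → fderiv ℝ (Ω.indicator h) x = 0 := by
    have hmeas : MeasurableSet (Ωᶜ ∩ {x | DifferentiableAt ℝ (Ω.indicator h) x}) :=
      hΩ.measurableSet.compl.inter (measurableSet_of_differentiableAt ℝ _)
    filter_upwards [hLip.ae_differentiableAt, (ae_restrict_iff' hmeas).1 <|
      ae_restrict_fderiv_eq_zero_of_eq_zero (μ := μ) hmeas (fun x hx => hx.2)
        fun x hx => indicator_of_notMem hx.1 h] with x hdiff hzero hx
    exact hzero ⟨hx, hdiff⟩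
  calc ∫ x in Ω, fderiv ℝ h x e ∂μ
      = ∫ x in Ω, fderiv ℝ (Ω.indicator h) x e ∂μ :=
        setIntegral_congr_fun hΩ.measurableSet fun x hx => by rw [inside x hx]
    _ = ∫ x, fderiv ℝ (Ω.indicator h) x e ∂μ :=
        setIntegral_eq_integral_of_ae_compl_eq_zero <| by
          filter_upwards [outside] with x hx hxΩ
          rw [hx hxΩ, zero_apply]
    _ = 0 := integral_fderiv_apply_eq_zero_of_hasCompactSupport hLip hsupp e

theorem setIntegral_fderiv_apply_eq_zero_of_eq_zero_on_frontier {F : Type*}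
    [NormedAddCommGroup F] [NormedSpace ℝ F] [CompleteSpace F] (hΩ : IsOpen Ω)
    (hΩb : IsBounded Ω) {h : E → F} (hh : ContDiff ℝ 1 h) (h0 : ∀ x ∈ frontier Ω, h x = 0)
    (e : E) :
    ∫ x in Ω, fderiv ℝ h x e ∂μ = 0 := by
  refine SeparatingDual.eq_zero_of_forall_dual_eq_zero (R := ℝ) fun ℓ => ?_
  have hint : IntegrableOn (fun x => fderiv ℝ h x e) Ω μ :=
    integrableOn_of_continuous_of_isBounded hΩb
      ((hh.continuous_fderiv one_ne_zero).clm_apply continuous_const)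
  calc ℓ (∫ x in Ω, fderiv ℝ h x e ∂μ)
      = ∫ x in Ω, ℓ (fderiv ℝ h x e) ∂μ := (ℓ.integral_comp_comm hint).symm
    _ = ∫ x in Ω, fderiv ℝ (ℓ ∘ h) x e ∂μ := by
        congr with x
        rw [(ℓ.hasFDerivAt.comp x (hh.differentiable one_ne_zero x).hasFDerivAt).fderiv,
          ContinuousLinearMap.comp_apply]
    _ = 0 := setIntegral_fderiv_apply_eq_zero_of_eq_zero_on_frontier_real hΩ hΩb
        (ℓ.contDiff.comp hh) (fun x hx => by rw [Function.comp_apply, h0 x hx, map_zero]) e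

theorem setIntegral_inner_fderiv_apply_eq_neg (𝕜 : Type*) {F : Type*} [RCLike 𝕜]
    [NormedAddCommGroup F] [InnerProductSpace 𝕜 F] [NormedSpace ℝ F] (hΩ : IsOpen Ω)
    (hΩb : IsBounded Ω) {u v : E → F} (hu : ContDiff ℝ 1 u) (hv : ContDiff ℝ 1 v)
    (h0 : ∀ x ∈ frontier Ω, ⟪u x, v x⟫_𝕜 = 0) (e : E) :
    ∫ x in Ω, ⟪u x, fderiv ℝ v x e⟫_𝕜 ∂μ = -∫ x in Ω, ⟪fderiv ℝ u x e, v x⟫_𝕜 ∂μ := by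
  have hu' := (hu.continuous_fderiv one_ne_zero).clm_apply (continuous_const (y := e))
  have hv' := (hv.continuous_fderiv one_ne_zero).clm_apply (continuous_const (y := e))
  rw [← add_eq_zero_iff_eq_neg, ← integral_add
    (integrableOn_of_continuous_of_isBounded hΩb (hu.continuous.inner hv'))
    (integrableOn_of_continuous_of_isBounded hΩb (hu'.inner hv.continuous))]
  simp_rw [← fun x => fderiv_inner_apply 𝕜 (hu.differentiable one_ne_zero x)
    (hv.differentiable one_ne_zero x) e]
  exact setIntegral_fderiv_apply_eq_zero_of_eq_zero_on_frontier hΩ hΩb (hu.inner 𝕜 hv) h0 e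

end Divergence

section SecondDerivatives

variable {E F : Type*} [NormedAddCommGroup E] [NormedAddCommGroup F] [NormedSpace ℝ F]
  {m n : WithTop ℕ∞} {u : E → F}

theorem fderiv_fderiv_apply_const [NormedSpace ℝ E] {x : E}
    (hd : DifferentiableAt ℝ (fderiv ℝ u) x) (e : E) :
    fderiv ℝ (fun y => fderiv ℝ u y e) x = (fderiv ℝ (fderiv ℝ u) x).flip e := by
  rw [fderiv_clm_apply hd (differentiableAt_const e)]
  simp

theorem contDiff_fderiv_apply_const [NormedSpace ℝ E] (hu : ContDiff ℝ n u)
    (hmn : m + 1 ≤ n) (e : E) :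
    ContDiff ℝ m fun x => fderiv ℝ u x e :=
  (hu.fderiv_right hmn).clm_apply contDiff_const

theorem laplacian_eq_sum_fderiv_fderiv [InnerProductSpace ℝ E] [FiniteDimensional ℝ E] {ι : Type*}
    [Fintype ι] (b : OrthonormalBasis ι ℝ E) (u : E → F) (x : E) :
    Δ u x = ∑ i, fderiv ℝ (fderiv ℝ u) x (b i) (b i) := by
  simp [InnerProductSpace.laplacian_eq_iteratedFDeriv_orthonormalBasis u b,
    iteratedFDeriv_two_apply]

theorem contDiff_laplacian [InnerProductSpace ℝ E] [FiniteDimensional ℝ E]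
    (hu : ContDiff ℝ n u) (hmn : m + 2 ≤ n) : ContDiff ℝ m (Δ u) := by
  rw [funext (laplacian_eq_sum_fderiv_fderiv (stdOrthonormalBasis ℝ E) u)]
  refine ContDiff.sum fun i _ => ?_
  have hu' : ContDiff ℝ (m + 1) (fderiv ℝ u) :=
    hu.fderiv_right (by rwa [add_assoc, one_add_one_eq_two])
  exact (contDiff_fderiv_apply_const hu' le_rfl _).clm_apply contDiff_const

end SecondDerivatives

section Green

variable {E : Type*} [NormedAddCommGroup E] [MeasurableSpace E] [BorelSpace E] {μ : Measure E}
  {Ω : Set E} (𝕜 : Type*) {F : Type*} [RCLike 𝕜] [NormedAddCommGroup F] [InnerProductSpace 𝕜 F]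
  [NormedSpace ℝ F] {u v : E → F}

theorem setIntegral_inner_fderiv_fderiv_comm [NormedSpace ℝ E] [FiniteDimensional ℝ E]
    [μ.IsAddHaarMeasure] (hΩ : IsOpen Ω) (hΩb : IsBounded Ω) (hu : ContDiff ℝ 2 u)
    (hv : ContDiff ℝ 2 v) (hu0 : ∀ x ∈ frontier Ω, u x = 0) (hv0 : ∀ x ∈ frontier Ω, v x = 0)
    (e : E) :
    ∫ x in Ω, ⟪u x, fderiv ℝ (fderiv ℝ v) x e e⟫_𝕜 ∂μ
      = ∫ x in Ω, ⟪fderiv ℝ (fderiv ℝ u) x e e, v x⟫_𝕜 ∂μ := by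
  have twice {w : E → F} (hw : ContDiff ℝ 2 w) (x : E) :
      fderiv ℝ (fun y => fderiv ℝ w y e) x e = fderiv ℝ (fderiv ℝ w) x e e := by
    rw [fderiv_fderiv_apply_const ((hw.fderiv_right (m := 1)
      one_add_one_eq_two.le).differentiable one_ne_zero x) e, ContinuousLinearMap.flip_apply]
  have hue : ContDiff ℝ 1 fun x => fderiv ℝ u x e :=
    contDiff_fderiv_apply_const hu one_add_one_eq_two.le e
  have hve : ContDiff ℝ 1 fun x => fderiv ℝ v x e :=
    contDiff_fderiv_apply_const hv one_add_one_eq_two.le e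
  calc ∫ x in Ω, ⟪u x, fderiv ℝ (fderiv ℝ v) x e e⟫_𝕜 ∂μ
      = ∫ x in Ω, ⟪u x, fderiv ℝ (fun y => fderiv ℝ v y e) x e⟫_𝕜 ∂μ := by
        simp_rw [twice hv]
    _ = -∫ x in Ω, ⟪fderiv ℝ u x e, fderiv ℝ v x e⟫_𝕜 ∂μ :=
        setIntegral_inner_fderiv_apply_eq_neg 𝕜 hΩ hΩb (hu.of_le one_le_two) hve
          (fun x hx => by rw [hu0 x hx, inner_zero_left]) e
    _ = ∫ x in Ω, ⟪fderiv ℝ (fun y => fderiv ℝ u y e) x e, v x⟫_𝕜 ∂μ := by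
        rw [setIntegral_inner_fderiv_apply_eq_neg 𝕜 hΩ hΩb hue (hv.of_le one_le_two)
          (fun x hx => by rw [hv0 x hx, inner_zero_right]) e, neg_neg]
    _ = ∫ x in Ω, ⟪fderiv ℝ (fderiv ℝ u) x e e, v x⟫_𝕜 ∂μ := by
        simp_rw [twice hu]

theorem setIntegral_inner_laplacian_comm [InnerProductSpace ℝ E] [FiniteDimensional ℝ E]
    [μ.IsAddHaarMeasure] (hΩ : IsOpen Ω) (hΩb : IsBounded Ω) (hu : ContDiff ℝ 2 u)
    (hv : ContDiff ℝ 2 v) (hu0 : ∀ x ∈ frontier Ω, u x = 0)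
    (hv0 : ∀ x ∈ frontier Ω, v x = 0) :
    ∫ x in Ω, ⟪u x, Δ v x⟫_𝕜 ∂μ = ∫ x in Ω, ⟪Δ u x, v x⟫_𝕜 ∂μ := by
  have second_continuous {w : E → F} (hw : ContDiff ℝ 2 w) (e : E) :
      Continuous fun x => fderiv ℝ (fderiv ℝ w) x e e :=
    (((hw.fderiv_right (m := 1) one_add_one_eq_two.le).continuous_fderiv one_ne_zero).clm_apply
      continuous_const).clm_apply continuous_const
  simp_rw [laplacian_eq_sum_fderiv_fderiv (stdOrthonormalBasis ℝ E), inner_sum, sum_inner]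
  rw [integral_finsetSum, integral_finsetSum]
  · exact Finset.sum_congr rfl fun i _ =>
      setIntegral_inner_fderiv_fderiv_comm 𝕜 hΩ hΩb hu hv hu0 hv0 _
  · exact fun i _ => integrableOn_of_continuous_of_isBounded hΩb
      ((second_continuous hu _).inner hv.continuous)
  · exact fun i _ => integrableOn_of_continuous_of_isBounded hΩb
      (hu.continuous.inner (second_continuous hv _))

end Green

section EnergyEstimate

variable {E : Type*} [NormedAddCommGroup E] [InnerProductSpace ℝ E] [FiniteDimensional ℝ E]
  [MeasurableSpace E] [BorelSpace E] {μ : Measure E} [μ.IsAddHaarMeasure] {Ω : Set E}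
  {H : Type*} [NormedAddCommGroup H] [InnerProductSpace ℂ H] {V : E → ℝ} {lam : ℂ}
  {f u : E → H}

theorem setIntegral_im_inner_laplacian_laplacian_eq_zero (hΩ : IsOpen Ω) (hΩb : IsBounded Ω)
    (hu : ContDiff ℝ 4 u) (hu0 : ∀ x ∈ frontier Ω, u x = 0)
    (hΔu0 : ∀ x ∈ frontier Ω, Δ u x = 0) :
    ∫ x in Ω, (⟪u x, Δ (Δ u) x⟫_ℂ).im ∂μ = 0 := by
  have hΔu : ContDiff ℝ 2 (Δ u) := contDiff_laplacian hu two_add_two_eq_four.le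
  have hint : IntegrableOn (fun x => ⟪u x, Δ (Δ u) x⟫_ℂ) Ω μ :=
    integrableOn_of_continuous_of_isBounded hΩb
      (hu.continuous.inner (contDiff_laplacian hΔu (zero_add 2).le).continuous)
  have hintΔ : IntegrableOn (fun x => ⟪Δ u x, Δ u x⟫_ℂ) Ω μ :=
    integrableOn_of_continuous_of_isBounded hΩb (hΔu.continuous.inner hΔu.continuous)
  calc ∫ x in Ω, (⟪u x, Δ (Δ u) x⟫_ℂ).im ∂μ
      = (∫ x in Ω, ⟪u x, Δ (Δ u) x⟫_ℂ ∂μ).im := integral_im hint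
    _ = (∫ x in Ω, ⟪Δ u x, Δ u x⟫_ℂ ∂μ).im := by
        rw [setIntegral_inner_laplacian_comm ℂ hΩ hΩb (hu.of_le (by norm_num)) hΔu hu0 hΔu0]
    _ = ∫ x in Ω, (⟪Δ u x, Δ u x⟫_ℂ).im ∂μ := (integral_im hintΔ).symm
    _ = 0 := integral_eq_zero_of_ae <| Eventually.of_forall fun x => inner_self_im (𝕜 := ℂ) _

theorem setIntegral_im_inner_eq_neg_im_mul (hΩ : IsOpen Ω) (hΩb : IsBounded Ω)
    (hu : ContDiff ℝ 4 u)
    (heq : ∀ x ∈ Ω, Δ (Δ u) x + (V x : ℂ) • u x - lam • u x = f x)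
    (hu0 : ∀ x ∈ frontier Ω, u x = 0) (hΔu0 : ∀ x ∈ frontier Ω, Δ u x = 0) :
    ∫ x in Ω, (⟪u x, f x⟫_ℂ).im ∂μ = -(lam.im * ∫ x in Ω, ‖u x‖ ^ 2 ∂μ) := by
  have pointwise : ∀ x ∈ Ω,
      (⟪u x, f x⟫_ℂ).im = (⟪u x, Δ (Δ u) x⟫_ℂ).im - lam.im * ‖u x‖ ^ 2 := by
    intro x hx
    rw [← heq x hx, inner_sub_right, inner_add_right, inner_smul_right, inner_smul_right,
      inner_self_eq_norm_sq_to_K]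
    simp [← Complex.ofReal_pow]
  have hbilap : Continuous (Δ (Δ u)) :=
    (contDiff_laplacian (m := 0) (contDiff_laplacian (m := 2) hu two_add_two_eq_four.le)
      (zero_add 2).le).continuous
  have him : Continuous fun x => (⟪u x, Δ (Δ u) x⟫_ℂ).im :=
    Complex.continuous_im.comp (hu.continuous.inner hbilap)
  rw [setIntegral_congr_fun hΩ.measurableSet pointwise, integral_sub
      (integrableOn_of_continuous_of_isBounded hΩb him)
      (integrableOn_of_continuous_of_isBounded hΩb (by fun_prop)),
    setIntegral_im_inner_laplacian_laplacian_eq_zero hΩ hΩb hu hu0 hΔu0, integral_const_mul,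
    zero_sub]

theorem sq_im_mul_setIntegral_norm_sq_le (hΩ : IsOpen Ω) (hΩb : IsBounded Ω)
    (hf : IntegrableOn (fun x => ‖f x‖ ^ 2) Ω μ) (hu : ContDiff ℝ 4 u)
    (heq : ∀ x ∈ Ω, Δ (Δ u) x + (V x : ℂ) • u x - lam • u x = f x)
    (hu0 : ∀ x ∈ frontier Ω, u x = 0) (hΔu0 : ∀ x ∈ frontier Ω, Δ u x = 0) :
    lam.im ^ 2 * ∫ x in Ω, ‖u x‖ ^ 2 ∂μ ≤ ∫ x in Ω, ‖f x‖ ^ 2 ∂μ := by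
  have hu2 : IntegrableOn (fun x => ‖u x‖ ^ 2) Ω μ :=
    integrableOn_of_continuous_of_isBounded hΩb (by fun_prop)
  have pointwise (x : E) :
      ‖-lam.im * (⟪u x, f x⟫_ℂ).im‖ ≤ (lam.im ^ 2 * ‖u x‖ ^ 2 + ‖f x‖ ^ 2) / 2 :=
    calc ‖-lam.im * (⟪u x, f x⟫_ℂ).im‖
        ≤ |lam.im| * (‖u x‖ * ‖f x‖) := by
          rw [norm_mul, norm_neg, Real.norm_eq_abs, Real.norm_eq_abs]
          gcongr
          exact (Complex.abs_im_le_norm _).trans (norm_inner_le_norm _ _)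
      _ ≤ (lam.im ^ 2 * ‖u x‖ ^ 2 + ‖f x‖ ^ 2) / 2 := by
          rw [← sq_abs lam.im]
          linarith [two_mul_le_add_sq (|lam.im| * ‖u x‖) ‖f x‖]
  have half : lam.im ^ 2 * ∫ x in Ω, ‖u x‖ ^ 2 ∂μ
      ≤ (lam.im ^ 2 * (∫ x in Ω, ‖u x‖ ^ 2 ∂μ) + ∫ x in Ω, ‖f x‖ ^ 2 ∂μ) / 2 :=
    calc lam.im ^ 2 * ∫ x in Ω, ‖u x‖ ^ 2 ∂μ
        = ∫ x in Ω, -lam.im * (⟪u x, f x⟫_ℂ).im ∂μ := by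
          rw [integral_const_mul, setIntegral_im_inner_eq_neg_im_mul hΩ hΩb hu heq hu0 hΔu0]
          ring
      _ ≤ ‖∫ x in Ω, -lam.im * (⟪u x, f x⟫_ℂ).im ∂μ‖ := Real.le_norm_self _
      _ ≤ ∫ x in Ω, (lam.im ^ 2 * ‖u x‖ ^ 2 + ‖f x‖ ^ 2) / 2 ∂μ :=
          norm_integral_le_of_norm_le (((hu2.const_mul _).add hf).div_const 2)
            (Eventually.of_forall pointwise)
      _ = (lam.im ^ 2 * (∫ x in Ω, ‖u x‖ ^ 2 ∂μ) + ∫ x in Ω, ‖f x‖ ^ 2 ∂μ) / 2 := by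
          rw [integral_div, integral_add (hu2.const_mul _) hf, integral_const_mul]
  linarith

theorem stmt3_general (hΩ : IsOpen Ω) (hΩb : IsBounded Ω) (hlam : lam.im ≠ 0)
    (hf : IntegrableOn (fun x => ‖f x‖ ^ 2) Ω μ) (hu : ContDiff ℝ 4 u)
    (heq : ∀ x ∈ Ω, Δ (Δ u) x + (V x : ℂ) • u x - lam • u x = f x)
    (hu0 : ∀ x ∈ frontier Ω, u x = 0) (hΔu0 : ∀ x ∈ frontier Ω, Δ u x = 0) :
    Real.sqrt (∫ x in Ω, ‖u x‖ ^ 2 ∂μ)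
      ≤ (1 / |lam.im|) * Real.sqrt (∫ x in Ω, ‖f x‖ ^ 2 ∂μ) := by
  rw [one_div_mul_eq_div, le_div_iff₀' (abs_pos.2 hlam), ← Real.sqrt_sq_eq_abs,
    ← Real.sqrt_mul (sq_nonneg _)]
  exact Real.sqrt_le_sqrt (sq_im_mul_setIntegral_norm_sq_le hΩ hΩb hf hu heq hu0 hΔu0)

end EnergyEstimate

theorem lapC_eq_laplacian {n : ℕ} (g : EuclideanSpace ℝ (Fin n) → ℂ) : lapC n g = Δ g := by
  ext x
  simp [lapC, laplacian_eq_sum_fderiv_fderiv (EuclideanSpace.basisFun (Fin n) ℝ)]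

/-- L² energy estimate for the Navier boundary value problem of the biharmonic
operator `Δ² + V`: if `Δ²u + Vu - λu = f` in `B_R` with `u = Δu = 0` on `∂B_R`,
then `‖u‖_{L²(B_R)} ≤ |Im λ|⁻¹ ‖f‖_{L²(B_R)}`. -/
theorem stmt3 (n : ℕ) (hn : 1 ≤ n) (R : ℝ) (hR : 0 < R)
    (V : EuclideanSpace ℝ (Fin n) → ℝ) (hVmeas : Measurable V)
    (hVbdd : ∃ M : ℝ, ∀ x, |V x| ≤ M)
    (lam : ℂ) (hlam : lam.im ≠ 0)
    (f : EuclideanSpace ℝ (Fin n) → ℂ) (hf : Continuous f)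
    (u : EuclideanSpace ℝ (Fin n) → ℂ) (hu : ContDiff ℝ (⊤ : ℕ∞) u)
    (heq : ∀ x ∈ closedBall (0 : EuclideanSpace ℝ (Fin n)) R,
      lapC n (lapC n u) x + (V x : ℂ) * u x - lam * u x = f x)
    (hub : ∀ x ∈ sphere (0 : EuclideanSpace ℝ (Fin n)) R, u x = 0)
    (hlapub : ∀ x ∈ sphere (0 : EuclideanSpace ℝ (Fin n)) R, lapC n u x = 0) :
    Real.sqrt (∫ x in ball (0 : EuclideanSpace ℝ (Fin n)) R, ‖u x‖ ^ 2)
      ≤ (1 / |lam.im|) * Real.sqrt (∫ x in ball (0 : EuclideanSpace ℝ (Fin n)) R, ‖f x‖ ^ 2) := by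
  simp only [lapC_eq_laplacian] at heq hlapub
  rw [← frontier_ball _ hR.ne'] at hub hlapub
  exact stmt3_general isOpen_ball isBounded_ball hlam
    (integrableOn_of_continuous_of_isBounded isBounded_ball (by fun_prop))
    (contDiff_infty.1 hu 4) (fun x hx => heq x (ball_subset_closedBall hx)) hub hlapub
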